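/- The set of n-event synchronization matrices is closed under element-wise intersection and element-wise union: if M and N are n-event synchronization matrices, then the matrices (i,j) ↦ M i j ∩ N i j and (i,j) ↦ M i j ∪ N i j are also n-event synchronization matrices (the diagonal remains 1, entries remain in S, and mirror symmetry across the diagonal is preserved because μ(a ∩ b) = μ(a) ∩ μ(b) and μ(a ∪ b) = μ(a) ∪ μ(b)). -/

import Mathlib

/-!
A synchronization relation is exactly a union of some of the atoms `<`, `=`, `>` that partition
`ℝ × ℝ`: its membership depends only on the truth values attached to these atoms
(`mem_SyncS_iff`). In this description intersection and union act as `∧` and `∨` on the truth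
values, so `SyncS` is closed under both. The diagonal condition is immediate, and the mirror
condition holds because `mirror` is a preimage and so commutes with `∩` and `∪`.
-/

/-- Synchronization relation `≥` on times in ℝ. -/
def relGE : Set (ℝ × ℝ) := {p | p.1 ≥ p.2}
/-- Synchronization relation `≤`. -/
def relLE : Set (ℝ × ℝ) := {p | p.1 ≤ p.2}
/-- Synchronization relation `=`. -/
def relEQ : Set (ℝ × ℝ) := {p | p.1 = p.2}
/-- Synchronization relation `≠`. -/
def relNE : Set (ℝ × ℝ) := {p | p.1 ≠ p.2}
/-- Synchronization relation `>`. -/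
def relGT : Set (ℝ × ℝ) := {p | p.1 > p.2}
/-- Synchronization relation `<`. -/
def relLT : Set (ℝ × ℝ) := {p | p.1 < p.2}

/-- The set `S` of the eight synchronization relations:
`{1, ≥, ≤, =, ≠, >, <, 0}` where `1 = univ` and `0 = ∅`. -/
def SyncS : Set (Set (ℝ × ℝ)) :=
  {Set.univ, relGE, relLE, relEQ, relNE, relGT, relLT, ∅}

/-- The mirror operator `μ`. -/
def mirror (s : Set (ℝ × ℝ)) : Set (ℝ × ℝ) := {p | (p.2, p.1) ∈ s}

/-- An `n`-event synchronization matrix: diagonal entries are `1 = univ`,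
off-diagonal entries lie in `S`, and `M j i = μ (M i j)`. -/
def IsSyncMatrix {n : ℕ} (M : Fin n → Fin n → Set (ℝ × ℝ)) : Prop :=
  (∀ i, M i i = Set.univ) ∧
  (∀ i j, i ≠ j → M i j ∈ SyncS) ∧
  (∀ i j, M j i = mirror (M i j))

/-- The relation holding at `(x, y)` iff the proposition attached to the one true comparison
among `x < y`, `x = y`, `x > y` holds: the union of the atoms selected by `a`, `b`, `c`. -/
def atomUnion (a b c : Prop) : Set (ℝ × ℝ) :=
  {p | (p.1 < p.2 ∧ a) ∨ (p.1 = p.2 ∧ b) ∨ (p.1 > p.2 ∧ c)}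

/-- The eight synchronization relations are the eight unions of atoms. -/
lemma mem_SyncS_iff (s : Set (ℝ × ℝ)) : s ∈ SyncS ↔ ∃ a b c : Prop, s = atomUnion a b c := by
  have e1 : atomUnion True True True = Set.univ := by
    ext p; simpa [atomUnion] using lt_trichotomy p.1 p.2
  have e2 : atomUnion False True True = relGE := by
    ext p; simp [atomUnion, relGE, le_iff_lt_or_eq, or_comm, eq_comm]
  have e3 : atomUnion True True False = relLE := by
    ext p; simp [atomUnion, relLE, le_iff_lt_or_eq]
  have e4 : atomUnion False True False = relEQ := by
    ext p; simp [atomUnion, relEQ]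
  have e5 : atomUnion True False True = relNE := by
    ext p; simp [atomUnion, relNE, lt_or_lt_iff_ne]
  have e6 : atomUnion False False True = relGT := by
    ext p; simp [atomUnion, relGT]
  have e7 : atomUnion True False False = relLT := by
    ext p; simp [atomUnion, relLT]
  have e8 : atomUnion False False False = ∅ := by
    ext p; simp [atomUnion]
  constructor
  · rintro (h | h | h | h | h | h | h | h)
    exacts [⟨_, _, _, h.trans e1.symm⟩, ⟨_, _, _, h.trans e2.symm⟩, ⟨_, _, _, h.trans e3.symm⟩,
      ⟨_, _, _, h.trans e4.symm⟩, ⟨_, _, _, h.trans e5.symm⟩, ⟨_, _, _, h.trans e6.symm⟩,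
      ⟨_, _, _, h.trans e7.symm⟩, ⟨_, _, _, h.trans e8.symm⟩]
  · rintro ⟨a, b, c, rfl⟩
    by_cases ha : a <;> by_cases hb : b <;> by_cases hc : c <;>
      simp [ha, hb, hc, e1, e2, e3, e4, e5, e6, e7, e8, SyncS]

lemma SyncS_inter {s t : Set (ℝ × ℝ)} (hs : s ∈ SyncS) (ht : t ∈ SyncS) : s ∩ t ∈ SyncS := by
  rw [mem_SyncS_iff] at *
  obtain ⟨a, b, c, rfl⟩ := hs
  obtain ⟨a', b', c', rfl⟩ := ht
  refine ⟨a ∧ a', b ∧ b', c ∧ c', ?_⟩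
  ext p
  -- On each atom the other two comparisons are false, leaving a propositional identity.
  rcases lt_trichotomy p.1 p.2 with h | h | h
  · simp [atomUnion, h, h.ne, h.not_gt]
  · simp [atomUnion, h]
  · simp [atomUnion, h, h.ne', h.not_gt]

lemma SyncS_union {s t : Set (ℝ × ℝ)} (hs : s ∈ SyncS) (ht : t ∈ SyncS) : s ∪ t ∈ SyncS := by
  rw [mem_SyncS_iff] at *
  obtain ⟨a, b, c, rfl⟩ := hs
  obtain ⟨a', b', c', rfl⟩ := ht
  refine ⟨a ∨ a', b ∨ b', c ∨ c', ?_⟩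
  ext p
  simp only [atomUnion, Set.mem_union, Set.mem_ofPred_eq]
  tauto

theorem syncMatrix_closed_inter_union {n : ℕ}
    (M N : Fin n → Fin n → Set (ℝ × ℝ))
    (hM : IsSyncMatrix M) (hN : IsSyncMatrix N) :
    IsSyncMatrix (fun i j => M i j ∩ N i j) ∧
    IsSyncMatrix (fun i j => M i j ∪ N i j) := by
  obtain ⟨dM, sM, mM⟩ := hM
  obtain ⟨dN, sN, mN⟩ := hN
  refine ⟨⟨fun i => ?_, fun i j h => SyncS_inter (sM i j h) (sN i j h), fun i j => ?_⟩,
    ⟨fun i => ?_, fun i j h => SyncS_union (sM i j h) (sN i j h), fun i j => ?_⟩⟩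
  · simp [dM, dN]
  · simp only [mM i j, mN i j]; rfl
  · simp [dM, dN]
  · simp only [mM i j, mN i j]; rfl
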